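/- Let q ≥ 2 be an integer and d > 0 a real number. Suppose z' and z'' are complex roots of the polynomial a_p(z) = z^q − z^{q−1} − d with 0 ≤ arg(z') < arg(z'') ≤ π. Then |z''| < |z'|. -/

import Mathlib

/-!
With `n = q - 1`, a root `z = r e^{iθ}` satisfies
`d ^ 2 = ‖z ^ n * (z - 1)‖ ^ 2 = r ^ (2 * n) * (r ^ 2 - 2 * r * cos θ + 1)`. For `r > 0` the right
side increases with `θ ∈ [0, π]`, so it suffices that, for the larger of the two angles, it is
nondecreasing in `r`. Its logarithmic derivative has the sign of a quadratic in `r`, which is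
nonnegative for `r ≥ 0` when `(2 * n + 1) * cos θ ≤ √((2 * n + 1) ^ 2 - 1)`. This is clear for
`cos θ ≤ 0`. For `0 < θ < π / 2`, `z ^ n = d / (z - 1)` lies in the lower half-plane, which forces
`n * θ > π`; then `sin θ ≥ 2 * θ / π` gives `n * sin θ ≥ 2`, more than enough.
-/

open Real

lemma quadratic_nonneg_of_mul_le_sqrt {s c r : ℝ} (hs : 0 ≤ s)
    (hc : (s + 1) * c ≤ √((s + 1) ^ 2 - 1)) (hr : 0 ≤ r) :
    0 ≤ (s + 2) * r ^ 2 - 2 * ((s + 1) * c) * r + s := by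
  have hsqrt : √((s + 1) ^ 2 - 1) = √(s + 2) * √s := by
    rw [← sqrt_mul (by positivity)]
    ring_nf
  calc
    0 ≤ (√(s + 2) * r - √s) ^ 2 := sq_nonneg _
    _ = (s + 2) * r ^ 2 - 2 * √((s + 1) ^ 2 - 1) * r + s := by
      rw [hsqrt, sub_sq, mul_pow, sq_sqrt hs, sq_sqrt (by positivity)]
      ring
    _ ≤ (s + 2) * r ^ 2 - 2 * ((s + 1) * c) * r + s := by gcongr

lemma hasDerivAt_rpow_mul_quadratic (s c : ℝ) {r : ℝ} (hr : r ≠ 0) :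
    HasDerivAt (fun r : ℝ ↦ r ^ s * (r ^ 2 - 2 * r * c + 1))
      (r ^ (s - 1) * ((s + 2) * r ^ 2 - 2 * ((s + 1) * c) * r + s)) r := by
  have hrpow : HasDerivAt (fun r : ℝ ↦ r ^ s) (s * r ^ (s - 1)) r :=
    hasDerivAt_rpow_const (.inl hr)
  have hquad : HasDerivAt (fun r : ℝ ↦ r ^ 2 - 2 * r * c + 1) (2 * r - 2 * c) r := by
    simpa using ((hasDerivAt_pow 2 r).sub
      (((hasDerivAt_id r).const_mul 2).mul_const c)).add_const 1
  refine (hrpow.mul hquad).congr_deriv ?_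
  rw [rpow_sub_one hr]
  field_simp
  ring

lemma monotoneOn_rpow_mul_quadratic {s c : ℝ} (hs : 0 ≤ s)
    (hc : (s + 1) * c ≤ √((s + 1) ^ 2 - 1)) :
    MonotoneOn (fun r : ℝ ↦ r ^ s * (r ^ 2 - 2 * r * c + 1)) (Set.Ici 0) := by
  have pos_of_mem {r : ℝ} (hr : r ∈ interior (Set.Ici 0)) : 0 < r := by simpa using hr
  refine monotoneOn_of_hasDerivWithinAt_nonneg (convex_Ici 0)
    ((continuous_rpow_const hs).continuousOn.mul (by fun_prop))
    (fun r hr ↦ (hasDerivAt_rpow_mul_quadratic s c (pos_of_mem hr).ne').hasDerivWithinAt)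
    fun r hr ↦ ?_
  exact mul_nonneg (rpow_nonneg (pos_of_mem hr).le _)
    (quadratic_nonneg_of_mul_le_sqrt hs hc (pos_of_mem hr).le)

lemma norm_sub_one_sq (z : ℂ) : ‖z - 1‖ ^ 2 = ‖z‖ ^ 2 - 2 * ‖z‖ * cos z.arg + 1 := by
  rw [mul_assoc, Complex.norm_mul_cos_arg, Complex.sq_norm, Complex.sq_norm, Complex.normSq_sub,
    map_one, map_one, mul_one]
  ring

lemma norm_pow_mul_sub_one_sq (n : ℕ) (z : ℂ) :
    ‖z ^ n * (z - 1)‖ ^ 2 = ‖z‖ ^ (2 * n : ℝ) * (‖z‖ ^ 2 - 2 * ‖z‖ * cos z.arg + 1) := by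
  rw [norm_mul, norm_pow, mul_pow, norm_sub_one_sq, ← pow_mul', ← rpow_natCast]
  push_cast
  rfl

lemma norm_lt_norm_of_cos_arg_lt {n : ℕ} {z w : ℂ} (hz : z ≠ 0)
    (hnorm : ‖z ^ n * (z - 1)‖ = ‖w ^ n * (w - 1)‖) (hcos : cos w.arg < cos z.arg)
    (hw : (2 * n + 1) * cos w.arg ≤ √((2 * n + 1) ^ 2 - 1)) : ‖w‖ < ‖z‖ := by
  by_contra! hle
  have hz_pos : 0 < ‖z‖ := norm_pos_iff.mpr hz
  have hlt : ‖w ^ n * (w - 1)‖ ^ 2 < ‖w ^ n * (w - 1)‖ ^ 2 := calc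
    ‖w ^ n * (w - 1)‖ ^ 2 = ‖z‖ ^ (2 * n : ℝ) * (‖z‖ ^ 2 - 2 * ‖z‖ * cos z.arg + 1) := by
      rw [← hnorm, norm_pow_mul_sub_one_sq]
    _ < ‖z‖ ^ (2 * n : ℝ) * (‖z‖ ^ 2 - 2 * ‖z‖ * cos w.arg + 1) := by gcongr
    _ ≤ ‖w‖ ^ (2 * n : ℝ) * (‖w‖ ^ 2 - 2 * ‖w‖ * cos w.arg + 1) :=
      monotoneOn_rpow_mul_quadratic (by positivity) hw hz_pos.le (norm_nonneg w) hle
    _ = ‖w ^ n * (w - 1)‖ ^ 2 := (norm_pow_mul_sub_one_sq n w).symm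
  exact hlt.false

lemma im_pow_eq_norm_pow_mul_sin (n : ℕ) (z : ℂ) : (z ^ n).im = ‖z‖ ^ n * sin (n * z.arg) := by
  conv_lhs => rw [← Complex.norm_mul_exp_arg_mul_I z, mul_pow, ← Complex.exp_nat_mul]
  rw [← mul_assoc, ← Complex.ofReal_pow, Complex.im_ofReal_mul, ← Complex.ofReal_natCast,
    ← Complex.ofReal_mul, Complex.exp_ofReal_mul_I_im]

lemma pi_lt_mul_arg_of_pow_mul_sub_one_eq {n : ℕ} {d : ℝ} (hd : 0 < d) {z : ℂ}
    (hz : z ^ n * (z - 1) = d) (him : 0 < z.im) : π < n * z.arg := by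
  have hz_one : z - 1 ≠ 0 := fun h ↦ him.ne' (by simp [sub_eq_zero.mp h])
  have him_pow : (z ^ n).im < 0 := by
    rw [eq_div_of_mul_eq hz_one hz, div_eq_mul_inv, Complex.im_ofReal_mul, Complex.inv_im,
      Complex.sub_im, Complex.one_im, sub_zero]
    exact mul_neg_of_pos_of_neg hd (div_neg_of_neg_of_pos (neg_neg_of_pos him)
      (Complex.normSq_pos.mpr hz_one))
  by_contra! hle
  have harg : 0 ≤ z.arg := Complex.arg_nonneg_iff.mpr him.le
  rw [im_pow_eq_norm_pow_mul_sin] at him_pow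
  exact him_pow.not_ge (mul_nonneg (by positivity)
    (sin_nonneg_of_nonneg_of_le_pi (by positivity) hle))

lemma two_le_mul_sin_of_pi_le_mul {a x : ℝ} (ha : 0 ≤ a) (hx₀ : 0 ≤ x) (hx : x ≤ π / 2)
    (h : π ≤ a * x) : 2 ≤ a * sin x := calc
  2 = 2 / π * π := by field_simp
  _ ≤ 2 / π * (a * x) := by gcongr
  _ = a * (2 / π * x) := by ring
  _ ≤ a * sin x := by gcongr; exact mul_le_sin hx₀ hx

lemma mul_cos_le_sqrt_of_one_le_mul_sin {a x : ℝ} (h : 1 ≤ a * sin x) :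
    a * cos x ≤ √(a ^ 2 - 1) := by
  apply le_sqrt_of_sq_le
  calc
    (a * cos x) ^ 2 = a ^ 2 - (a * sin x) ^ 2 := by rw [mul_pow, cos_sq']; ring
    _ ≤ a ^ 2 - 1 := by gcongr; exact one_le_pow₀ h

lemma mul_cos_arg_le_sqrt_of_pow_mul_sub_one_eq {n : ℕ} {d : ℝ} (hd : 0 < d) {z : ℂ}
    (hz : z ^ n * (z - 1) = d) (harg : 0 < z.arg) :
    (2 * n + 1) * cos z.arg ≤ √((2 * n + 1) ^ 2 - 1) := by
  rcases le_or_gt (cos z.arg) 0 with hcos | hcos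
  · exact (mul_nonpos_of_nonneg_of_nonpos (by positivity) hcos).trans (sqrt_nonneg _)
  have hacute : z.arg ≤ π / 2 := by
    contrapose! hcos
    exact cos_nonpos_of_pi_div_two_le_of_le hcos.le (by linarith [z.arg_le_pi, pi_pos])
  have hsin : 0 < sin z.arg := sin_pos_of_pos_of_lt_pi harg (by linarith [pi_pos])
  have him : 0 < z.im := by
    rw [← Complex.norm_mul_sin_arg]
    exact mul_pos (norm_pos_iff.mpr fun h ↦ harg.ne' (by simp [h])) hsin
  have hpi := pi_lt_mul_arg_of_pow_mul_sub_one_eq hd hz him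
  have htwo := two_le_mul_sin_of_pi_le_mul n.cast_nonneg harg.le hacute hpi.le
  exact mul_cos_le_sqrt_of_one_le_mul_sin (by linarith)

theorem secondary_general {q : ℕ} (hq : 2 ≤ q) {d : ℝ} (hd : 0 < d) {z' z'' : ℂ}
    (hz' : ‖z' ^ q - z' ^ (q - 1)‖ = d) (hz'' : z'' ^ q - z'' ^ (q - 1) = d)
    (h1 : 0 ≤ z'.arg) (h2 : z'.arg < z''.arg) : ‖z''‖ < ‖z'‖ := by
  have factor (z : ℂ) : z ^ q - z ^ (q - 1) = z ^ (q - 1) * (z - 1) := by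
    rw [mul_sub_one, pow_sub_one_mul (by lia)]
  rw [factor] at hz' hz''
  refine norm_lt_norm_of_cos_arg_lt (n := q - 1) ?_ ?_
    (cos_lt_cos_of_nonneg_of_le_pi h1 z''.arg_le_pi h2)
    (mul_cos_arg_le_sqrt_of_pow_mul_sub_one_eq hd hz'' (h1.trans_lt h2))
  · rintro rfl
    rw [zero_pow (by lia), zero_mul, norm_zero] at hz'
    exact hd.ne hz'
  · rw [hz', hz'', Complex.norm_of_nonneg hd.le]

theorem secondary (q : ℕ) (hq : 2 ≤ q) (d : ℝ) (hd : 0 < d)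
    (z' z'' : ℂ)
    (hz' : z' ^ q - z' ^ (q - 1) - (d : ℂ) = 0)
    (hz'' : z'' ^ q - z'' ^ (q - 1) - (d : ℂ) = 0)
    (h1 : 0 ≤ Complex.arg z') (h2 : Complex.arg z' < Complex.arg z'')
    (h3 : Complex.arg z'' ≤ π) :
    ‖z''‖ < ‖z'‖ :=
  secondary_general hq hd (by rw [sub_eq_zero.mp hz', Complex.norm_of_nonneg hd.le])
    (sub_eq_zero.mp hz'') h1 h2
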